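/- Let K be ℝ or ℂ and let (J, B) be a pseudo-euclidean Jordan algebra over K such that the vector space of all associative symmetric bilinear forms on J is one-dimensional (i.e., ind(J) = 1). Then either J is simple (J² ≠ {0} and the only ideals of J are {0} and J) or J is the one-dimensional algebra with zero product. -/

import Mathlib

variable (K : Type*) [RCLike K]
variable (J : Type*) [NonUnitalNonAssocCommRing J] [Module K J]
  [SMulCommClass K J J] [IsScalarTower K J J] [FiniteDimensional K J]

/-- The space of all associative symmetric bilinear forms on the algebra `J`. -/
def assocSymmForms : Submodule K (J →ₗ[K] J →ₗ[K] K) where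
  carrier := {T | (∀ x y : J, T x y = T y x) ∧ (∀ x y z : J, T (x * y) z = T x (y * z))}
  add_mem' := by
    rintro a b ⟨ha1, ha2⟩ ⟨hb1, hb2⟩
    exact ⟨fun x y => by simp [LinearMap.add_apply, ha1 x y, hb1 x y],
      fun x y z => by simp [LinearMap.add_apply, ha2 x y z, hb2 x y z]⟩
  zero_mem' := ⟨fun x y => by simp, fun x y z => by simp⟩
  smul_mem' := by
    rintro c a ⟨ha1, ha2⟩
    exact ⟨fun x y => by simp [LinearMap.smul_apply, ha1 x y],
      fun x y z => by simp [LinearMap.smul_apply, ha2 x y z]⟩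

namespace JordanIndexOne

open Polynomial

section Multiplication

variable (F : Type*) [Field F] {A : Type*} [NonUnitalNonAssocCommRing A] [Module F A]
  [SMulCommClass F A A] [IsScalarTower F A A]

/-- Multiplication by an element, as an endomorphism depending linearly on the element. -/
noncomputable def mulEnd : A →ₗ[F] Module.End F A := LinearMap.mul F A

@[simp]
lemma mulEnd_apply (x y : A) : mulEnd F x y = x * y := rfl

variable [IsCommJordan A]

lemma mulEnd_commute_sq (x : A) : Commute (mulEnd F x) (mulEnd F (x * x)) := by
  ext y
  simp only [Module.End.mul_apply, mulEnd_apply]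
  rw [mul_comm (x * x) y, ← IsCommJordan.lmul_comm_rmul_rmul, mul_comm]

variable [CharZero F]

/-- The full linearization of the Jordan identity. -/
lemma jordan_linearized (F : Type*) [Field F] [CharZero F] {A : Type*}
    [NonUnitalNonAssocCommRing A] [Module F A] [IsCommJordan A] (a b c d : A) :
    a * (b * c * d) + b * (c * a * d) + c * (a * b * d) =
      b * c * (a * d) + c * a * (b * d) + a * b * (c * d) := by
  have h := DFunLike.congr_fun (two_nsmul_lie_lmul_lmul_add_add_eq_zero a b c) d
  have h2 : (2 : F) • (a * (b * c * d) + b * (c * a * d) + c * (a * b * d) -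
      (b * c * (a * d) + c * a * (b * d) + a * b * (c * d))) = 0 := by
    rw [ofNat_smul_eq_nsmul F 2]
    change 2 • ((a * (b * c * d) - b * c * (a * d)) + (b * (c * a * d) - c * a * (b * d)) +
      (c * (a * b * d) - a * b * (c * d))) = 0 at h
    rw [← h]
    congr 1
    abel
  exact sub_eq_zero.mp ((smul_eq_zero.mp h2).resolve_left two_ne_zero)

lemma mulEnd_mul_mul (a b c : A) :
    mulEnd F (a * (b * c)) = mulEnd F a * mulEnd F (b * c) + mulEnd F b * mulEnd F (a * c) +
      mulEnd F c * mulEnd F (a * b) - mulEnd F b * mulEnd F a * mulEnd F c -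
      mulEnd F c * mulEnd F a * mulEnd F b := by
  ext d
  have h₁ := jordan_linearized F a b c d
  have h₂ := jordan_linearized F d b c a
  simp only [LinearMap.sub_apply, LinearMap.add_apply, Module.End.mul_apply, mulEnd_apply]
  have e₁ : d * (b * c * a) = a * (b * c) * d := by simp only [mul_comm]
  have e₂ : b * (c * d * a) = b * (a * (c * d)) := by simp only [mul_comm]
  have e₃ : c * (d * b * a) = c * (a * (b * d)) := by simp only [mul_comm]
  have e₄ : b * c * (d * a) + c * d * (b * a) + d * b * (c * a) =
      b * c * (a * d) + c * a * (b * d) + a * b * (c * d) := by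
    rw [mul_comm d a, mul_comm (c * d), mul_comm (d * b), mul_comm d b, mul_comm b a]
    abel
  rw [e₁, e₂, e₃, e₄, ← h₁, mul_comm c a] at h₂
  rw [← sub_eq_zero] at h₂ ⊢
  rw [← h₂]
  abel

lemma mulEnd_lie_lie (a b c : A) :
    mulEnd F (a * (b * c) - b * (a * c)) =
      (mulEnd F a * mulEnd F b - mulEnd F b * mulEnd F a) * mulEnd F c -
        mulEnd F c * (mulEnd F a * mulEnd F b - mulEnd F b * mulEnd F a) := by
  rw [map_sub, mulEnd_mul_mul, mulEnd_mul_mul F b a c, mul_comm b a]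
  noncomm_ring

/-- `aeval (mulEnd F x) f x` plays the role of the value of `X * f` at `x`. -/
lemma commute_mulEnd_aeval (x : A) (f : F[X]) :
    Commute (mulEnd F x) (mulEnd F (aeval (mulEnd F x) f x)) := by
  have key : ∀ n : ℕ, Commute (mulEnd F x) (mulEnd F ((mulEnd F x ^ n) x)) ∧
      Commute (mulEnd F (x * x)) (mulEnd F ((mulEnd F x ^ n) x)) := by
    intro n
    induction n using Nat.twoStepInduction with
    | zero => exact ⟨Commute.refl _, (mulEnd_commute_sq F x).symm⟩
    | one => simpa using mulEnd_commute_sq F x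
    | more n h₀ h₁ =>
      have e₁ : (mulEnd F x ^ (n + 1)) x = x * (mulEnd F x ^ n) x := by
        rw [pow_succ', Module.End.mul_apply, mulEnd_apply]
      have e₂ : (mulEnd F x ^ (n + 2)) x = x * (x * (mulEnd F x ^ n) x) := by
        rw [pow_succ', Module.End.mul_apply, mulEnd_apply, e₁]
      rw [e₂, mulEnd_mul_mul, ← e₁]
      have hs := mulEnd_commute_sq F x
      have hr := Commute.refl (mulEnd F x)
      have hr' := Commute.refl (mulEnd F (x * x))
      exact ⟨((((hr.mul_right h₁.1).add_right (hr.mul_right h₁.1)).add_right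
          (h₀.1.mul_right hs)).sub_right ((hr.mul_right hr).mul_right h₀.1)).sub_right
          ((h₀.1.mul_right hr).mul_right hr),
        ((((hs.symm.mul_right h₁.2).add_right (hs.symm.mul_right h₁.2)).add_right
          (h₀.2.mul_right hr')).sub_right ((hs.symm.mul_right hs.symm).mul_right h₀.2)).sub_right
          ((h₀.2.mul_right hs.symm).mul_right hs.symm)⟩
  induction f using Polynomial.induction_on' with
  | add p q hp hq => simpa using hp.add_right hq
  | monomial n c =>
    simpa [aeval_monomial, ← Algebra.smul_def] using (key n).1.smul_right c

lemma aeval_mulEnd_mul (x : A) (f g : F[X]) :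
    aeval (mulEnd F x) f x * aeval (mulEnd F x) g x = aeval (mulEnd F x) (X * f * g) x := by
  have h : Commute (mulEnd F (aeval (mulEnd F x) f x)) (aeval (mulEnd F x) g) := by
    induction g using Polynomial.induction_on' with
    | add p q hp hq => simpa using hp.add_right hq
    | monomial n c =>
      simpa [aeval_monomial, ← Algebra.smul_def] using
        ((commute_mulEnd_aeval F x f).symm.pow_right n).smul_right c
  have h' := LinearMap.congr_fun h.eq x
  simp only [Module.End.mul_apply, mulEnd_apply] at h'
  rw [h', mul_comm (X * f) g, map_mul (aeval _), map_mul (aeval _), aeval_X]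
  simp only [Module.End.mul_apply, mulEnd_apply, mul_comm]

lemma pow_mulEnd_apply_mul_self (x : A) (n : ℕ) :
    (mulEnd F (x * x) ^ n) (x * x) = (mulEnd F x ^ (2 * n + 1)) x := by
  induction n with
  | zero => simp
  | succ n ih =>
    have h := aeval_mulEnd_mul F x X (X ^ (2 * n + 1))
    rw [aeval_X, aeval_X_pow, ← pow_two, ← pow_add, aeval_X_pow, mulEnd_apply] at h
    rw [pow_succ', Module.End.mul_apply, ih, mulEnd_apply, h]
    congr 2
    ring

lemma isNilpotent_mulEnd_of_pow_apply_eq_zero (n : ℕ) (x : A) (hx : (mulEnd F x ^ n) x = 0) :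
    IsNilpotent (mulEnd F x) := by
  induction n generalizing x with
  | zero => simp_all
  | succ n ih =>
    have hsq (y : A) (k : ℕ) (hk : k ≤ 2 * n + 1) (hy : (mulEnd F y ^ k) y = 0) :
        (mulEnd F (y * y) ^ n) (y * y) = 0 := by
      rw [pow_mulEnd_apply_mul_self, ← Nat.sub_add_cancel hk, pow_add, Module.End.mul_apply, hy,
        map_zero]
    have h₂ := hsq x (n + 1) (by lia) hx
    have h₄ := hsq (x * x) n (by lia) h₂
    set a := mulEnd F x with ha
    set c := mulEnd F (x * x) with hc
    set e := mulEnd F (x * x * (x * x)) with he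
    have hc_nil : IsNilpotent c := ih _ h₂
    have he_nil : IsNilpotent e := ih _ h₄
    have hac : a * c = c * a := mulEnd_commute_sq F x
    have hcube : mulEnd F (x * (x * x)) = 3 • (a * c) - 2 • a ^ 3 := by
      rw [mulEnd_mul_mul, ← ha, ← hc]
      noncomm_ring
    have hfour : e = 4 • (a ^ 2 * c) + c ^ 2 - 4 • a ^ 4 := by
      have hx4 : x * x * (x * x) = x * (x * (x * x)) := IsCommJordan.lmul_comm_rmul_rmul x x
      have hcaa : c * a * a = a * a * c := by rw [← hac, mul_assoc, ← hac, mul_assoc]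
      rw [he, hx4, mulEnd_mul_mul, hcube, ← ha, ← hc, hcaa]
      noncomm_ring
    have hcomm : Commute a c := hac
    have hae : Commute a e := by
      rw [hfour]
      exact ((((Commute.refl a).pow_right 2).mul_right hcomm).smul_right 4 |>.add_right
        (hcomm.pow_right 2)).sub_right (((Commute.refl a).pow_right 4).smul_right 4)
    have hce : Commute c e := by
      rw [hfour]
      exact (((hcomm.symm.pow_right 2).mul_right (Commute.refl c)).smul_right 4 |>.add_right
        ((Commute.refl c).pow_right 2)).sub_right ((hcomm.symm.pow_right 4).smul_right 4)
    have hnil : IsNilpotent ((4 : F) • a ^ 4) := by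
      have h4 : (4 : F) • a ^ 4 = (4 • a ^ 2 + c) * c - e := by
        rw [ofNat_smul_eq_nsmul F 4, hfour]
        noncomm_ring
      rw [h4]
      have h₁ : Commute (4 • a ^ 2 + c) c :=
        ((hcomm.pow_left 2).smul_left 4).add_left (Commute.refl c)
      have h₂ : Commute (4 • a ^ 2 + c) e := ((hae.pow_left 2).smul_left 4).add_left hce
      exact (h₂.mul_left hce).isNilpotent_sub (h₁.isNilpotent_mul_left hc_nil) he_nil
    have := hnil.smul (4 : F)⁻¹
    rw [smul_smul, inv_mul_cancel₀ (by norm_num), one_smul] at this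
    exact (IsNilpotent.pow_iff_pos (by norm_num)).mp this

variable [FiniteDimensional F A]

lemma exists_idempotent_of_forall_pow_apply_ne_zero (x : A)
    (hx : ∀ n : ℕ, (mulEnd F x ^ n) x ≠ 0) : ∃ e : A, e ≠ 0 ∧ e * e = e := by
  set p := minpoly F (mulEnd F x)
  have hp : p ≠ 0 := minpoly.ne_zero (Algebra.IsIntegral.isIntegral _)
  obtain ⟨q, hpq, hq⟩ := exists_eq_pow_rootMultiplicity_mul_and_not_dvd p hp 0
  rw [C_0, sub_zero] at hpq hq
  set k := rootMultiplicity 0 p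
  obtain ⟨s, t, hst⟩ := ((irreducible_X.coprime_iff_not_dvd.mpr hq).pow_left :
    IsCoprime (X ^ (k + 1)) q)
  have hkill : aeval (mulEnd F x) (X ^ k * q) = 0 := hpq ▸ minpoly.aeval F (mulEnd F x)
  refine ⟨aeval (mulEnd F x) (s * X ^ k) x, fun h ↦ hx k ?_, ?_⟩
  · have : (X ^ k : F[X]) = X ^ (k + 1) * (s * X ^ k) + t * (X ^ k * q) := by
      linear_combination (-X ^ k) * hst
    rw [← aeval_X_pow (R := F), this, map_add, map_mul (aeval _), map_mul (aeval _) t, hkill,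
      mul_zero, add_zero, Module.End.mul_apply, h, map_zero]
  · have : X * (s * X ^ k) * (s * X ^ k) = s * X ^ k - s * t * (X ^ k * q) := by
      linear_combination (s * X ^ k) * hst
    rw [aeval_mulEnd_mul, this, map_sub, map_mul (aeval _) (s * t), hkill, mul_zero, sub_zero]

lemma trace_mulEnd_ne_zero_of_idempotent (e : A) (he : e ≠ 0) (hee : e * e = e) :
    LinearMap.trace F A (mulEnd F e) ≠ 0 := by
  set l := mulEnd F e with hl
  have hcube : 2 • (l * l * l) = 3 • (l * l) - l := by
    have h := mulEnd_mul_mul F e e e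
    simp only [hee, ← hl] at h
    rw [sub_sub, eq_sub_iff_add_eq] at h
    rw [eq_sub_iff_add_eq, add_comm, two_nsmul, h]
    abel
  have hcube' : 2 • (l * l * l * l) = 3 • (l * l * l) - l * l := by
    have := congrArg (· * l) hcube
    simpa only [sub_mul, smul_mul_assoc] using this
  have hP : IsIdempotentElem (2 • (l * l) - l) := by
    have h : (2 • (l * l) - l) * (2 • (l * l) - l) =
        2 • (2 • (l * l * l * l)) - 2 • (2 • (l * l * l)) + l * l := by noncomm_ring
    rw [IsIdempotentElem, h, hcube', smul_sub, smul_comm 2 3, hcube]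
    noncomm_ring
  have hQ : IsIdempotentElem (4 • (l - l * l)) := by
    have h : (4 • (l - l * l)) * (4 • (l - l * l)) =
        16 • (l * l) - 16 • (2 • (l * l * l)) + 8 • (2 • (l * l * l * l)) := by noncomm_ring
    rw [IsIdempotentElem, h, hcube', smul_sub 8, smul_smul 8 3, show 8 * 3 = 12 * 2 from rfl,
      ← smul_smul 12 2, hcube]
    noncomm_ring
  have hsum : 2 • l = 2 • (2 • (l * l) - l) + 4 • (l - l * l) := by noncomm_ring
  intro h0
  have htr := congrArg (LinearMap.trace F A) hsum
  rw [map_add, map_nsmul, map_nsmul, h0,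
    LinearMap.IsProj.trace (LinearMap.IsIdempotentElem.isProj_range _ hP),
    LinearMap.IsProj.trace (LinearMap.IsIdempotentElem.isProj_range _ hQ)] at htr
  have hrank : Module.finrank F (LinearMap.range (2 • (l * l) - l)) = 0 := by
    have : (0 : ℕ) = 2 * Module.finrank F (LinearMap.range (2 • (l * l) - l)) +
        Module.finrank F (LinearMap.range (4 • (l - l * l))) := by
      have : ((0 : ℕ) : F) = ((2 * Module.finrank F (LinearMap.range (2 • (l * l) - l)) +
        Module.finrank F (LinearMap.range (4 • (l - l * l))) : ℕ) : F) := by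
        push_cast
        simpa [nsmul_eq_mul] using htr
      exact_mod_cast this
    lia
  have hbot := Submodule.finrank_eq_zero.mp hrank
  have hmem : e ∈ LinearMap.range (2 • (l * l) - l) :=
    ⟨e, by simp [hl, hee, two_smul]⟩
  rw [hbot] at hmem
  exact he hmem

/-- If the trace of `mulEnd` vanishes on all products, then the algebra is nil. -/
lemma isNilpotent_mulEnd_of_trace_eq_zero
    (h : ∀ x y : A, LinearMap.trace F A (mulEnd F (x * y)) = 0) (x : A) :
    IsNilpotent (mulEnd F x) := by
  by_contra hx
  obtain ⟨e, he, hee⟩ := exists_idempotent_of_forall_pow_apply_ne_zero F x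
    fun n hn ↦ hx (isNilpotent_mulEnd_of_pow_apply_eq_zero F n x hn)
  exact trace_mulEnd_ne_zero_of_idempotent F e he hee (hee ▸ h e e)

end Multiplication

section Structure

attribute [local instance] LieRing.ofAssociativeRing

variable (F : Type*) [Field F] (A : Type*) [NonUnitalNonAssocCommRing A] [Module F A]
  [SMulCommClass F A A] [IsScalarTower F A A]

/-- The span of the commutators of multiplication operators. -/
def innerDerivations : Submodule F (Module.End F A) :=
  Submodule.span F (Set.range fun p : A × A ↦ ⁅mulEnd F p.1, mulEnd F p.2⁆)

variable {F A}

lemma lie_mulEnd_mem_innerDerivations (x y : A) :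
    ⁅mulEnd F x, mulEnd F y⁆ ∈ innerDerivations F A :=
  Submodule.subset_span ⟨(x, y), rfl⟩

/-- Endomorphisms adjoint to each other for a nondegenerate form have the same trace. -/
lemma trace_eq_of_adjoint {V : Type*} [AddCommGroup V] [Module F V] [FiniteDimensional F V]
    (B : V →ₗ[F] V →ₗ[F] F) (hB : ∀ x, (∀ y, B x y = 0) → x = 0) {f g : Module.End F V}
    (h : ∀ x y, B (f x) y = B x (g y)) : LinearMap.trace F V f = LinearMap.trace F V g := by
  have hinj : Function.Injective B := (injective_iff_map_eq_zero B).mpr fun x hx ↦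
    hB x fun y ↦ by simp [hx]
  let β : V ≃ₗ[F] Module.Dual F V :=
    LinearEquiv.ofInjectiveOfFinrankEq B hinj Subspace.dual_finrank_eq.symm
  have hβ : β.conj f = Module.Dual.transpose (R := F) g := by
    refine LinearMap.ext fun φ ↦ ?_
    obtain ⟨x, rfl⟩ := β.surjective φ
    ext y
    change β (f (β.symm (β x))) y = B x (g y)
    rw [β.symm_apply_apply]
    exact h x y
  rw [← LinearMap.trace_conj' f β, hβ, LinearMap.trace_transpose']

variable (B : A →ₗ[F] A →ₗ[F] F)

lemma trace_mulEnd_mul_innerDerivation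
    (hnondeg : ∀ x, (∀ y, B x y = 0) → x = 0) (hassoc : ∀ x y z, B (x * y) z = B x (y * z))
    [FiniteDimensional F A] (z : A)
    {d : Module.End F A} (hd : d ∈ innerDerivations F A) :
    LinearMap.trace F A (mulEnd F z * d) = 0 := by
  induction hd using Submodule.span_induction with
  | mem d h =>
    obtain ⟨⟨x, y⟩, rfl⟩ := h
    have hadj (a b c : A) : LinearMap.trace F A (mulEnd F a * mulEnd F b * mulEnd F c) =
        LinearMap.trace F A (mulEnd F c * mulEnd F b * mulEnd F a) :=
      trace_eq_of_adjoint B hnondeg fun u v ↦ by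
        simp only [Module.End.mul_apply, mulEnd_apply]
        rw [mul_comm a, hassoc, mul_comm b, hassoc, mul_comm c, hassoc]
    simp only [Ring.lie_def, mul_sub, map_sub, ← mul_assoc]
    rw [hadj, LinearMap.trace_mul_comm, ← mul_assoc, sub_self]
  | zero => simp
  | add d d' _ _ h h' => simp [mul_add, h, h']
  | smul c d _ h => simp [h]

variable [CharZero F]

lemma trace_mulEnd_mul_mulEnd
    (hnil : ∀ x : A, IsNilpotent (mulEnd F x))
    (x y : A) :
    LinearMap.trace F A (mulEnd F x * mulEnd F y) = 0 := by
  have hsq (z : A) : LinearMap.trace F A (mulEnd F z * mulEnd F z) = 0 :=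
    (LinearMap.isNilpotent_trace_of_isNilpotent
      ((Commute.refl (mulEnd F z)).isNilpotent_mul_right (hnil z))).eq_zero
  have h := hsq (x + y)
  rw [map_add, mul_add, add_mul, add_mul, map_add, map_add, map_add, hsq, hsq,
    LinearMap.trace_mul_comm F (mulEnd F y), zero_add, add_zero, ← two_mul] at h
  exact (mul_eq_zero.mp h).resolve_left two_ne_zero

variable [IsCommJordan A]

lemma lie_mulEnd_of_mem_innerDerivations {d : Module.End F A} (hd : d ∈ innerDerivations F A)
    (z : A) : ⁅d, mulEnd F z⁆ = mulEnd F (d z) := by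
  induction hd using Submodule.span_induction with
  | mem d h =>
    obtain ⟨⟨x, y⟩, rfl⟩ := h
    have h := mulEnd_lie_lie F x y z
    simp only [Ring.lie_def, LinearMap.sub_apply, Module.End.mul_apply, mulEnd_apply]
    exact h.symm
  | zero => simp
  | add d d' _ _ h h' => simp [add_lie, h, h']
  | smul c d _ h => simp [smul_lie, h]

lemma lie_mem_innerDerivations {d d' : Module.End F A} (hd : d ∈ innerDerivations F A)
    (hd' : d' ∈ innerDerivations F A) : ⁅d, d'⁆ ∈ innerDerivations F A := by
  induction hd' using Submodule.span_induction with
  | mem d' h =>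
    obtain ⟨⟨x, y⟩, rfl⟩ := h
    rw [leibniz_lie, lie_mulEnd_of_mem_innerDerivations hd, lie_mulEnd_of_mem_innerDerivations hd]
    exact add_mem (lie_mulEnd_mem_innerDerivations _ _) (lie_mulEnd_mem_innerDerivations _ _)
  | zero => simp
  | add d d' _ _ h h' => rw [lie_add]; exact add_mem h h'
  | smul c d _ h => rw [lie_smul]; exact Submodule.smul_mem _ c h

variable (F A) in
/-- The Lie algebra spanned by multiplication operators and their commutators. -/
noncomputable def structureLieAlgebra : LieSubalgebra F (Module.End F A) where
  __ := LinearMap.range (mulEnd F (A := A)) ⊔ innerDerivations F A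
  lie_mem' := by
    intro f g hf hg
    obtain ⟨_, ⟨x, rfl⟩, d, hd, rfl⟩ := Submodule.mem_sup.mp hf
    obtain ⟨_, ⟨y, rfl⟩, d', hd', rfl⟩ := Submodule.mem_sup.mp hg
    have h : ⁅mulEnd F x + d, mulEnd F y + d'⁆ =
        mulEnd F (d y - d' x) + (⁅mulEnd F x, mulEnd F y⁆ + ⁅d, d'⁆) := by
      rw [add_lie, lie_add, lie_add, ← lie_skew (mulEnd F x) d',
        lie_mulEnd_of_mem_innerDerivations hd, lie_mulEnd_of_mem_innerDerivations hd', map_sub]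
      abel
    rw [h]
    exact Submodule.add_mem_sup ⟨_, rfl⟩
      (add_mem (lie_mulEnd_mem_innerDerivations x y) (lie_mem_innerDerivations hd hd'))

lemma mem_structureLieAlgebra {f : Module.End F A} :
    f ∈ structureLieAlgebra F A ↔ ∃ x, ∃ d ∈ innerDerivations F A, mulEnd F x + d = f := by
  refine Submodule.mem_sup.trans ⟨?_, ?_⟩
  · rintro ⟨_, ⟨x, rfl⟩, d, hd, rfl⟩
    exact ⟨x, d, hd, rfl⟩
  · rintro ⟨x, d, hd, rfl⟩
    exact ⟨_, ⟨x, rfl⟩, d, hd, rfl⟩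

lemma mulEnd_mem_structureLieAlgebra (x : A) : mulEnd F x ∈ structureLieAlgebra F A :=
  mem_structureLieAlgebra.mpr ⟨x, 0, zero_mem _, add_zero _⟩

lemma trace_innerDerivation_mul_innerDerivation
    (hnil : ∀ x : A, IsNilpotent (mulEnd F x))
    {d d' : Module.End F A}
    (hd : d ∈ innerDerivations F A) (hd' : d' ∈ innerDerivations F A) :
    LinearMap.trace F A (d * d') = 0 := by
  induction hd' using Submodule.span_induction with
  | mem d' h =>
    obtain ⟨⟨x, y⟩, rfl⟩ := h
    have h := trace_mulEnd_mul_mulEnd hnil (d x) y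
    rw [← lie_mulEnd_of_mem_innerDerivations hd] at h
    simp only [Ring.lie_def, mul_sub, sub_mul, map_sub] at h ⊢
    rw [mul_assoc, mul_assoc, LinearMap.trace_mul_comm F (mulEnd F x), mul_assoc] at h
    exact h
  | zero => simp
  | add d d' _ _ h h' => simp [mul_add, h, h']
  | smul c d _ h => simp [h]

variable [FiniteDimensional F A]

lemma traceForm_structureLieAlgebra
    (hnondeg : ∀ x, (∀ y, B x y = 0) → x = 0) (hassoc : ∀ x y z, B (x * y) z = B x (y * z))
    (hnil : ∀ x : A, IsNilpotent (mulEnd F x)) :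
    LieModule.traceForm F (structureLieAlgebra F A) A = 0 := by
  ext ⟨f, hf⟩ ⟨g, hg⟩
  obtain ⟨x, d, hd, rfl⟩ := mem_structureLieAlgebra.mp hf
  obtain ⟨y, d', hd', rfl⟩ := mem_structureLieAlgebra.mp hg
  change LinearMap.trace F A ((mulEnd F x + d) * (mulEnd F y + d')) = 0
  rw [mul_add, add_mul, add_mul, map_add, map_add, map_add, LinearMap.trace_mul_comm F d,
    trace_mulEnd_mul_mulEnd hnil, trace_mulEnd_mul_innerDerivation B hnondeg hassoc y hd,
    trace_mulEnd_mul_innerDerivation B hnondeg hassoc x hd',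
    trace_innerDerivation_mul_innerDerivation hnil hd hd']
  simp

/-- A nonzero nil Jordan algebra with a nondegenerate associative form has a nonzero
annihilator. -/
lemma exists_ne_zero_forall_mul_eq_zero
    (hnondeg : ∀ x, (∀ y, B x y = 0) → x = 0) (hassoc : ∀ x y z, B (x * y) z = B x (y * z))
    (hnil : ∀ x : A, IsNilpotent (mulEnd F x))
    [Nontrivial A] : ∃ v : A, v ≠ 0 ∧ ∀ x : A, x * v = 0 := by
  let g := structureLieAlgebra F A
  let D := LieAlgebra.derivedSeries F g 1
  have hD : LieModule.IsNilpotent D A :=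
    LieModule.isNilpotent_derivedSeries_of_traceForm_eq_zero
      (traceForm_structureLieAlgebra B hnondeg hassoc hnil)
  have hlie (f h : g) : ⁅f, h⁆ ∈ D := by
    simp only [D, LieAlgebra.derivedSeriesOfIdeal_succ,
      LieAlgebra.derivedSeriesOfIdeal_zero]
    exact LieSubmodule.lie_mem_lie (LieSubmodule.mem_top f) (LieSubmodule.mem_top h)
  let l (x : A) : g := ⟨mulEnd F x, mulEnd_mem_structureLieAlgebra x⟩
  -- The kernel of the derived algebra is a nonzero ideal on which multiplications commute.
  let V : Submodule F A := LieModule.maxTrivSubmodule F D A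
  have hV (v : A) : v ∈ V ↔ ∀ d ∈ D, (d : Module.End F A) v = 0 :=
    (LieModule.mem_maxTrivSubmodule F D A v).trans Subtype.forall
  have hVmul (x v : A) (hv : v ∈ V) : x * v ∈ V := by
    rw [hV] at hv ⊢
    intro d hd
    have h := hv _ (hlie d (l x))
    have h' : (d : Module.End F A) (x * v) - x * (d : Module.End F A) v = 0 := h
    rwa [hv d hd, mul_zero, sub_zero] at h'
  have hcomm (x y v : A) (hv : v ∈ V) : x * (y * v) = y * (x * v) :=
    sub_eq_zero.mp ((hV v).mp hv _ (hlie (l x) (l y)))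
  have hVbot : V ≠ ⊥ := by
    have := LieModule.nontrivial_max_triv_of_isNilpotent F D A
    exact (Submodule.nontrivial_iff_ne_bot (p := V)).mp this
  -- A minimal nonzero ideal inside it is annihilated by everything.
  obtain ⟨I, ⟨hI, hIV, hImul⟩, hmin⟩ := WellFounded.has_min
    (wellFounded_lt (α := Submodule F A))
    {I | I ≠ ⊥ ∧ I ≤ V ∧ ∀ x, ∀ i ∈ I, x * i ∈ I} ⟨V, hVbot, le_rfl, hVmul⟩
  have hann (x : A) : I ≤ LinearMap.ker (mulEnd F x) := by
    have hne : I ⊓ LinearMap.ker (mulEnd F x) ≠ ⊥ := by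
      obtain ⟨w, hw, hw0⟩ := Submodule.exists_mem_ne_zero_of_ne_bot hI
      classical
      have hex : ∃ n, (mulEnd F x ^ n) w = 0 := by
        obtain ⟨n, hn⟩ := hnil x
        exact ⟨n, by rw [hn, LinearMap.zero_apply]⟩
      have hpos : Nat.find hex ≠ 0 := fun h ↦ hw0 (by simpa [h] using Nat.find_spec hex)
      have hmemI (n : ℕ) : (mulEnd F x ^ n) w ∈ I := by
        induction n with
        | zero => simpa using hw
        | succ n ih => rw [pow_succ']; exact hImul x _ ih
      refine (Submodule.ne_bot_iff _).mpr ⟨(mulEnd F x ^ (Nat.find hex - 1)) w,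
        ⟨hmemI _, ?_⟩, Nat.find_min hex (by lia)⟩
      rw [SetLike.mem_coe, LinearMap.mem_ker, ← Module.End.mul_apply, ← pow_succ',
        Nat.sub_add_cancel (by lia)]
      exact Nat.find_spec hex
    have hnot := hmin (I ⊓ LinearMap.ker (mulEnd F x)) ⟨hne, inf_le_left.trans hIV, fun y i hi ↦
      ⟨hImul y i hi.1, by
        have := hi.2
        rw [SetLike.mem_coe, LinearMap.mem_ker, mulEnd_apply] at this ⊢
        rw [hcomm x y i (hIV hi.1), this, mul_zero]⟩⟩
    exact inf_eq_left.mp (inf_le_left.eq_of_not_lt hnot)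
  obtain ⟨v, hv, hv0⟩ := Submodule.exists_mem_ne_zero_of_ne_bot hI
  exact ⟨v, hv0, fun x ↦ hann x hv⟩

end Structure

section Forms

variable {F : Type*} [Field F] {A : Type*} [NonUnitalNonAssocCommRing A] [Module F A]
  (B : A →ₗ[F] A →ₗ[F] F)

lemma mul_mem_orthogonal
    (hassoc : ∀ x y z, B (x * y) z = B x (y * z))
    {I : Submodule F A} (hI : ∀ x, ∀ i ∈ I, x * i ∈ I) (x o : A)
    (ho : o ∈ LinearMap.BilinForm.orthogonal B I) :
    x * o ∈ LinearMap.BilinForm.orthogonal B I := fun i hi ↦ by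
  have h : B (x * i) o = 0 := ho _ (hI x i hi)
  rw [mul_comm, hassoc] at h
  exact h

lemma mul_eq_zero_of_mem_inf_orthogonal
    (hnondeg : ∀ x, (∀ y, B x y = 0) → x = 0) (hassoc : ∀ x y z, B (x * y) z = B x (y * z))
    {I : Submodule F A} (hI : ∀ x, ∀ i ∈ I, x * i ∈ I)
    {i j : A} (hi : i ∈ I) (hj : j ∈ LinearMap.BilinForm.orthogonal B I) : i * j = 0 := by
  refine hnondeg _ fun x ↦ ?_
  rw [hassoc, mul_comm]
  exact mul_mem_orthogonal B hassoc hI x j hj i hi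

/-- If every associative symmetric form is a multiple of `B` and the algebra has a nonzero
annihilator, it is the one-dimensional algebra with zero product. -/
lemma one_dimensional_of_annihilator
    (hnondeg : ∀ x, (∀ y, B x y = 0) → x = 0) (hassoc : ∀ x y z, B (x * y) z = B x (y * z))
    (hmul : ∀ T : A →ₗ[F] A →ₗ[F] F, (∀ x y, T x y = T y x) →
      (∀ x y z, T (x * y) z = T x (y * z)) → ∃ c : F, T = c • B)
    {v : A} (hv : v ≠ 0) (hann : ∀ x, x * v = 0) :
    Module.finrank F A = 1 ∧ ∀ x y : A, x * y = 0 := by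
  have hBv (x y : A) : B v (x * y) = 0 := by rw [← hassoc, mul_comm, hann, map_zero]; rfl
  obtain ⟨c, hc⟩ := hmul ((LinearMap.mul F F).compl₁₂ (B v) (B v))
    (fun x y ↦ by simp [mul_comm]) (fun x y z ↦ by simp [hBv])
  have hc' (x y : A) : B v x * B v y = c * B x y := LinearMap.congr_fun₂ hc x y
  obtain ⟨w, hw⟩ : ∃ w, B v w ≠ 0 := by
    by_contra! h
    exact hv (hnondeg v h)
  have hc0 : c ≠ 0 := by
    rintro rfl
    have h := hc' w w
    rw [zero_mul] at h
    exact hw (mul_self_eq_zero.mp h)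
  have hker (x : A) (hx : B v x = 0) : x = 0 := hnondeg x fun y ↦ by
    have h := hc' x y
    rw [hx, zero_mul] at h
    exact (mul_eq_zero.mp h.symm).resolve_left hc0
  refine ⟨finrank_eq_one w (fun h ↦ hw (by rw [h, map_zero])) fun x ↦
    ⟨B v x / B v w, ?_⟩, fun x y ↦ hker _ (hBv x y)⟩
  refine sub_eq_zero.mp (hker _ ?_)
  rw [map_sub, map_smul, smul_eq_mul, div_mul_cancel₀ _ hw, sub_self]

/-- If every associative symmetric form is a multiple of `B`, an ideal meeting its orthogonal
trivially is trivial. -/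
lemma ideal_eq_bot_or_top
    (hsymm : ∀ x y, B x y = B y x) (hnondeg : ∀ x, (∀ y, B x y = 0) → x = 0)
    (hassoc : ∀ x y z, B (x * y) z = B x (y * z))
    [FiniteDimensional F A]
    (hmul : ∀ T : A →ₗ[F] A →ₗ[F] F, (∀ x y, T x y = T y x) →
      (∀ x y z, T (x * y) z = T x (y * z)) → ∃ c : F, T = c • B)
    (I : Submodule F A) (hI : ∀ x, ∀ i ∈ I, x * i ∈ I)
    (hdisj : Disjoint I (LinearMap.BilinForm.orthogonal B I)) : I = ⊥ ∨ I = ⊤ := by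
  set O := LinearMap.BilinForm.orthogonal B I
  have hrefl : LinearMap.IsRefl B := fun x y h ↦ (hsymm y x).trans h
  have hcompl : IsCompl I O :=
    (LinearMap.BilinForm.isCompl_orthogonal_iff_disjoint hrefl).mpr hdisj
  let π := I.projection O hcompl
  have hπI (x : A) : π x ∈ I := Submodule.projection_apply_mem hcompl x
  have hπO (x : A) : x - π x ∈ O := by
    rw [← Submodule.projection_eq_self_sub_projection hcompl]
    exact Submodule.projection_apply_mem hcompl.symm x
  have hπmul (x y : A) : π (x * y) = π x * π y := by
    have h : x * y = π x * π y + (y * (x - π x) + π x * (y - π y)) := by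
      rw [mul_sub, mul_sub, mul_comm y, mul_comm y]
      abel
    have hO := mul_mem_orthogonal B hassoc hI
    rw [h, map_add, Submodule.projection_apply_of_mem_left hcompl (hI _ _ (hπI y)),
      Submodule.projection_apply_of_mem_right hcompl
        (add_mem (hO _ _ (hπO x)) (hO _ _ (hπO y))), add_zero]
  obtain ⟨c, hc⟩ := hmul (B.compl₁₂ π π) (fun x y ↦ hsymm _ _) fun x y z ↦ by
    simp [hπmul, hassoc]
  have hc' (x y : A) : B (π x) (π y) = c * B x y := LinearMap.congr_fun₂ hc x y
  by_cases hObot : O = ⊥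
  · exact .inr (by simpa [hObot] using hcompl.sup_eq_top)
  obtain ⟨o, ho, ho0⟩ := Submodule.exists_mem_ne_zero_of_ne_bot hObot
  have hc0 : c = 0 := by
    by_contra hc0
    refine ho0 (hnondeg o fun y ↦ ?_)
    have h := hc' o y
    rw [Submodule.projection_apply_of_mem_right hcompl ho, map_zero, LinearMap.zero_apply] at h
    exact (mul_eq_zero.mp h.symm).resolve_left hc0
  refine .inl ((Submodule.eq_bot_iff I).mpr fun i hi ↦ hnondeg i fun y ↦ ?_)
  have h₁ := hc' i y
  have h₂ : B i (y - π y) = 0 := hπO y i hi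
  rw [Submodule.projection_apply_of_mem_left hcompl hi, hc0, zero_mul] at h₁
  rwa [map_sub, h₁, sub_zero] at h₂

variable [SMulCommClass F A A] [IsScalarTower F A A]

variable (F A) in
/-- The form `(x, y) ↦ tr (mulEnd (x * y))`. -/
noncomputable def mulTraceForm : A →ₗ[F] A →ₗ[F] F :=
  (LinearMap.mul F A).compr₂ (LinearMap.trace F A ∘ₗ mulEnd F)

lemma mulTraceForm_apply (x y : A) :
    mulTraceForm F A x y = LinearMap.trace F A (mulEnd F (x * y)) := rfl

lemma mulTraceForm_assoc [CharZero F] [IsCommJordan A] (x y z : A) :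
    mulTraceForm F A (x * y) z = mulTraceForm F A x (y * z) := by
  have h := congrArg (LinearMap.trace F A) (mulEnd_lie_lie F z x y)
  rw [map_sub (LinearMap.trace F A), LinearMap.trace_mul_comm, sub_self, map_sub, map_sub,
    sub_eq_zero] at h
  rwa [mulTraceForm_apply, mulTraceForm_apply, mul_comm (x * y), mul_comm y z]

/-- The trace form is degenerate along ideals of square zero. -/
lemma mulTraceForm_eq_zero_of_mem_ideal {N : Submodule F A}
    (hN : ∀ x, ∀ i ∈ N, x * i ∈ N) (hsq : ∀ i ∈ N, ∀ j ∈ N, i * j = 0) {i : A} (hi : i ∈ N)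
    (x : A) : mulTraceForm F A i x = 0 := by
  have hix : i * x ∈ N := mul_comm x i ▸ hN x i hi
  refine (LinearMap.isNilpotent_trace_of_isNilpotent ⟨2, ?_⟩).eq_zero
  ext y
  simp only [pow_two, Module.End.mul_apply, mulEnd_apply, LinearMap.zero_apply]
  exact hsq _ hix _ (mul_comm y (i * x) ▸ hN y _ hix)

end Forms

/-- In a one-dimensional subspace, every vector is a multiple of any given nonzero one. -/
lemma exists_eq_smul_of_finrank_submodule_eq_one {F V : Type*} [Field F] [AddCommMonoid V]
    [Module F V] (S : Submodule F V) (hS : Module.finrank F S = 1) {b t : V} (hb : b ∈ S)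
    (hb0 : b ≠ 0) (ht : t ∈ S) : ∃ c : F, t = c • b := by
  let _ : AddCommGroup S := Module.addCommMonoidToAddCommGroup F
  obtain ⟨c, hc⟩ := exists_smul_eq_of_finrank_eq_one hS (x := (⟨b, hb⟩ : S))
    (fun h ↦ hb0 (congrArg Subtype.val h)) ⟨t, ht⟩
  exact ⟨c, (congrArg Subtype.val hc).symm⟩

end JordanIndexOne

open JordanIndexOne in
/-- let `K` be `ℝ` or `ℂ` and `(J, B)` a pseudo-euclidean Jordan algebra over
`K` with `ind(J) = 1` (the space of associative symmetric bilinear forms on `J` is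
one-dimensional).  Then `J` is simple, or `J` is the one-dimensional algebra with zero
product. -/
theorem simple_or_one_dimensional_of_index_one
    {K : Type*} [RCLike K]
    {J : Type*} [NonUnitalNonAssocCommRing J] [Module K J]
    [SMulCommClass K J J] [IsScalarTower K J J] [FiniteDimensional K J]
    (hjordan : ∀ x y : J, (x * y) * (x * x) = x * (y * (x * x)))
    (B : J →ₗ[K] J →ₗ[K] K)
    (hsymm : ∀ x y : J, B x y = B y x)
    (hnondeg : ∀ x : J, (∀ y : J, B x y = 0) → x = 0)
    (hassoc : ∀ x y z : J, B (x * y) z = B x (y * z))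
    (hind : Module.finrank K (assocSymmForms K J) = 1) :
    -- `J` is simple …
    ((∃ x y : J, x * y ≠ 0) ∧
      (∀ I : Submodule K J, (∀ x : J, ∀ i ∈ I, x * i ∈ I) → I = ⊥ ∨ I = ⊤)) ∨
    -- … or `J` is the one-dimensional algebra with zero product
    (Module.finrank K J = 1 ∧ ∀ x y : J, x * y = 0) := by
  have : IsCommJordan J := ⟨hjordan⟩
  have hnontriv : Nontrivial J := by
    by_contra h
    rw [not_nontrivial_iff_subsingleton] at h
    rw [Module.finrank_zero_of_subsingleton (M := assocSymmForms K J)] at hind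
    exact zero_ne_one hind
  have hB : B ≠ 0 := by
    rintro rfl
    obtain ⟨x, hx⟩ := exists_ne (0 : J)
    exact hx (hnondeg x fun y ↦ rfl)
  have hmul (T : J →ₗ[K] J →ₗ[K] K) (hT : ∀ x y, T x y = T y x)
      (hT' : ∀ x y z, T (x * y) z = T x (y * z)) : ∃ c : K, T = c • B :=
    exists_eq_smul_of_finrank_submodule_eq_one (assocSymmForms K J) hind ⟨hsymm, hassoc⟩ hB
      ⟨hT, hT'⟩
  obtain ⟨c, hc⟩ := hmul (mulTraceForm K J)
    (fun x y ↦ by rw [mulTraceForm_apply, mulTraceForm_apply, mul_comm]) mulTraceForm_assoc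
  by_cases hc0 : c = 0
  · right
    have htr (x y : J) : LinearMap.trace K J (mulEnd K (x * y)) = 0 := by
      rw [← mulTraceForm_apply, hc, hc0, zero_smul]
      rfl
    obtain ⟨v, hv, hann⟩ := exists_ne_zero_forall_mul_eq_zero B hnondeg hassoc
      (isNilpotent_mulEnd_of_trace_eq_zero K htr)
    exact one_dimensional_of_annihilator B hnondeg hassoc hmul hv hann
  · left
    have hT {i : J} (hi : ∀ x, mulTraceForm K J i x = 0) : i = 0 := hnondeg i fun y ↦ by
      have h := hi y
      rw [hc] at h
      exact (mul_eq_zero.mp h).resolve_left hc0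
    refine ⟨?_, fun I hI ↦ ideal_eq_bot_or_top B hsymm hnondeg hassoc hmul I hI ?_⟩
    · by_contra! h
      obtain ⟨x, hx⟩ := exists_ne (0 : J)
      exact hx (hT fun y ↦ by rw [mulTraceForm_apply, h, map_zero, map_zero])
    · refine Submodule.disjoint_def.mpr fun i hi hi' ↦ hT fun x ↦
        mulTraceForm_eq_zero_of_mem_ideal (N := I ⊓ LinearMap.BilinForm.orthogonal B I)
          (fun y j hj ↦ ⟨hI y j hj.1, mul_mem_orthogonal B hassoc hI y j hj.2⟩)
          (fun j hj k hk ↦ mul_eq_zero_of_mem_inf_orthogonal B hnondeg hassoc hI hj.1 hk.2)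
          ⟨hi, hi'⟩ x
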